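/- (Abstract form of the semilinear existence theorem of Section 3.) Let Y be a Banach space, T > 0, and let 𝔖 : [0,T] → (Y →L Y) be continuous in the operator norm with 𝔖(0) = id. Let U ⊆ Y be open, u₀ ∈ U, let C : [0,T] → [0,∞) be continuous, and let F : [0,T] × Y → Y be continuous and satisfy, for all t ∈ [0,T] and all v, v₁, v₂ ∈ U: ‖F(t,v)‖ ≤ C(t)(1 + ‖v‖) and ‖F(t,v₁) − F(t,v₂)‖ ≤ C(t)‖v₁ − v₂‖. Then there exists T′ ∈ (0,T] and a continuous function u : [0,T′] → Y with u(t) ∈ U for all t ∈ [0,T′] and u(t) = 𝔖(t)u₀ + ∫₀ᵗ 𝔖(t−s) F(s, u(s)) ds for all t ∈ [0,T′] (Bochner integral); moreover u is the unique continuous U-valued function on [0,T′] satisfying this integral equation. -/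

import Mathlib

open MeasureTheory

/-!
The mild formulation is a Volterra equation `u t = g t + ∫ s in 0..t, k t s (u s)` with forcing
`g t = 𝔖 t u₀` and kernel `k t s y = 𝔖 (t - s) (F s y)`. By Banach–Steinhaus a strongly continuous
`𝔖` is bounded on `[0, T]`, which makes `k` continuous in `(t, s)` and uniformly Lipschitz in `y`.
Such a kernel is bounded near `g 0`, so on a short interval the right-hand side is a contraction of
a uniform tube around `g`. Solutions leaving the tube are excluded separately: the distance between
two solutions is dominated by a multiple of its own primitive, hence vanishes by Grönwall.
-/

open Set Metric Topology
open scoped NNReal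

theorem eqOn_zero_of_le_mul_integral {φ : ℝ → ℝ} {K a b : ℝ} (hφ : ContinuousOn φ (Icc a b))
    (hφ₀ : ∀ t ∈ Icc a b, 0 ≤ φ t) (hle : ∀ t ∈ Icc a b, φ t ≤ K * ∫ s in a..t, φ s) :
    EqOn φ 0 (Icc a b) := by
  intro t ht
  have hab : a ≤ b := ht.1.trans ht.2
  have hint : IntervalIntegrable φ volume a b := hφ.intervalIntegrable_of_Icc hab
  have hderiv : ∀ x ∈ Ico a b, HasDerivWithinAt (fun x => ∫ s in a..x, φ s) (φ x) (Ici x) x := by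
    intro x hx
    have hnhds : Icc a b ∈ 𝓝[>] x := Icc_mem_nhdsGT_of_mem hx
    exact intervalIntegral.integral_hasDerivWithinAt_right (t := Ioi x)
      (hint.mono_set (uIcc_subset_uIcc_left (uIcc_of_le hab ▸ Ico_subset_Icc_self hx)))
      ⟨Icc a b, hnhds, hφ.aestronglyMeasurable measurableSet_Icc⟩
      ((hφ x (Ico_subset_Icc_self hx)).mono_of_mem_nhdsWithin hnhds)
  have hnonneg : ∀ x ∈ Icc a b, 0 ≤ ∫ s in a..x, φ s := fun x hx =>
    intervalIntegral.integral_nonneg hx.1 fun s hs => hφ₀ s ⟨hs.1, hs.2.trans hx.2⟩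
  have hzero : ∫ s in a..t, φ s = 0 :=
    eq_zero_of_abs_deriv_le_mul_abs_self_of_eq_zero_right
      (uIcc_of_le hab ▸ intervalIntegral.continuousOn_primitive_interval' hint left_mem_uIcc)
      hderiv intervalIntegral.integral_same (fun x hx => by
        rw [Real.norm_of_nonneg (hφ₀ x (Ico_subset_Icc_self hx)),
          Real.norm_of_nonneg (hnonneg x (Ico_subset_Icc_self hx))]
        exact hle x (Ico_subset_Icc_self hx)) t ht
  exact le_antisymm (by simpa [hzero] using hle t ht) (hφ₀ t ht)

theorem intervalIntegrable_dist_of_Icc {α : Type*} [PseudoMetricSpace α] {f g : ℝ → α} {a b : ℝ}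
    (hab : a ≤ b) (hf : ContinuousOn f (Icc a b)) (hg : ContinuousOn g (Icc a b)) :
    IntervalIntegrable (fun s => dist (f s) (g s)) volume a b :=
  (continuous_dist.comp_continuousOn (hf.prodMk hg)).intervalIntegrable_of_Icc hab

section Volterra

variable {E : Type*} [NormedAddCommGroup E] {a T : ℝ} {L : ℝ≥0} {U V : Set E}
  {g w w₁ w₂ : ℝ → E} {k : ℝ → ℝ → E → E}

/-- The set of pairs `(t, s)` with `0 ≤ s ≤ t ≤ a`: the times at which a Volterra equation on
`[0, a]` evaluates its kernel. -/
def causalTriangle (a : ℝ) : Set (ℝ × ℝ) := {p | 0 ≤ p.2 ∧ p.2 ≤ p.1 ∧ p.1 ≤ a}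

theorem causalTriangle_subset : causalTriangle a ⊆ Icc 0 a ×ˢ Icc 0 a :=
  fun _ hp => ⟨⟨hp.1.trans hp.2.1, hp.2.2⟩, hp.1, hp.2.1.trans hp.2.2⟩

theorem causalTriangle_mono (h : a ≤ T) : causalTriangle a ⊆ causalTriangle T :=
  fun _ hp => ⟨hp.1, hp.2.1, hp.2.2.trans h⟩

theorem mk_mem_causalTriangle {t s : ℝ} (ht : t ≤ a) (hs : s ∈ Icc 0 t) :
    (t, s) ∈ causalTriangle a := ⟨hs.1, hs.2, ht⟩

theorem sub_mem_Icc_of_mem_causalTriangle {p : ℝ × ℝ} (hp : p ∈ causalTriangle a) :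
    p.1 - p.2 ∈ Icc 0 a :=
  ⟨sub_nonneg.2 hp.2.1, (sub_le_self _ hp.1).trans hp.2.2⟩

theorem isCompact_causalTriangle (a : ℝ) : IsCompact (causalTriangle a) :=
  (isCompact_Icc.prod isCompact_Icc).of_isClosed_subset
    ((isClosed_le continuous_const continuous_snd).inter
      ((isClosed_le continuous_snd continuous_fst).inter
        (isClosed_le continuous_fst continuous_const)))
    causalTriangle_subset

theorem continuousOn_slice_of_causalTriangle {α : Type*} [TopologicalSpace α] {f : ℝ → ℝ → α}
    (hf : ContinuousOn (fun p : ℝ × ℝ => f p.1 p.2) (causalTriangle a)) {t : ℝ} (ht : t ≤ a) :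
    ContinuousOn (f t) (Icc 0 t) :=
  hf.comp (by fun_prop : Continuous fun s : ℝ => (t, s)).continuousOn
    fun _ hs => mk_mem_causalTriangle ht hs

theorem continuousOn_integral_of_causalTriangle [NormedSpace ℝ E] {f : ℝ → ℝ → E}
    (hf : ContinuousOn (fun p : ℝ × ℝ => f p.1 p.2) (causalTriangle a)) :
    ContinuousOn (fun t => ∫ s in 0..t, f t s) (Icc 0 a) := by
  intro t₀ ht₀
  have ha : 0 ≤ a := ht₀.1.trans ht₀.2
  -- Clamping retracts the plane onto the triangle.
  let ρ : ℝ → ℝ := fun t => max 0 (min t a)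
  have hρ : ∀ t ∈ Icc 0 a, ρ t = t := fun t ht => by simp [ρ, ht.1, ht.2]
  have hext : Continuous fun p : ℝ × ℝ => f (ρ p.1) (max 0 (min p.2 (ρ p.1))) :=
    hf.comp_continuous (by fun_prop : Continuous fun p : ℝ × ℝ =>
      (ρ p.1, max 0 (min p.2 (ρ p.1)))) fun p =>
      ⟨le_max_left _ _, max_le (le_max_left _ _) (min_le_right _ _), max_le ha (min_le_right _ _)⟩
  refine (intervalIntegral.continuous_parametric_intervalIntegral_of_continuous
    (f := fun t s => f (ρ t) (max 0 (min s (ρ t)))) hext continuous_id).continuousOn.congr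
    (fun t ht => intervalIntegral.integral_congr fun s hs => ?_) t₀ ht₀
  rw [id, uIcc_of_le ht.1] at hs
  simp [hρ t ht, hs.1, hs.2]

/-- A kernel `k t s y` for a Volterra equation on `[0, a]` with values in `U`: continuous in the
times `(t, s)` and `L`-Lipschitz in the state `y ∈ U`, uniformly in the times. -/
structure IsLipschitzKernelOn (k : ℝ → ℝ → E → E) (L : ℝ≥0) (U : Set E) (a : ℝ) : Prop where
  continuousOn : ∀ y ∈ U, ContinuousOn (fun p : ℝ × ℝ => k p.1 p.2 y) (causalTriangle a)
  lipschitzOnWith : ∀ p ∈ causalTriangle a, LipschitzOnWith L (k p.1 p.2) U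

namespace IsLipschitzKernelOn

theorem mono (hk : IsLipschitzKernelOn k L U T) (hVU : V ⊆ U) (ha : a ≤ T) :
    IsLipschitzKernelOn k L V a where
  continuousOn y hy := (hk.continuousOn y (hVU hy)).mono (causalTriangle_mono ha)
  lipschitzOnWith p hp := (hk.lipschitzOnWith p (causalTriangle_mono ha hp)).mono hVU

theorem continuousOn_comp (hk : IsLipschitzKernelOn k L U a) (hw : ContinuousOn w (Icc 0 a))
    (hwU : MapsTo w (Icc 0 a) U) :
    ContinuousOn (fun p : ℝ × ℝ => k p.1 p.2 (w p.2)) (causalTriangle a) :=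
  have hsnd : MapsTo Prod.snd (causalTriangle a) (Icc 0 a) := fun _ hp =>
    (causalTriangle_subset hp).2
  (continuousOn_prod_of_continuousOn_lipschitzOnWith' (fun q : (ℝ × ℝ) × E => k q.1.1 q.1.2 q.2) L
    hk.lipschitzOnWith hk.continuousOn).comp
    (continuousOn_id.prodMk (hw.comp continuousOn_snd hsnd)) fun _ hp => ⟨hp, hwU (hsnd hp)⟩

theorem exists_norm_le (hk : IsLipschitzKernelOn k L U a) (hU : Bornology.IsBounded U) :
    ∃ B, ∀ p ∈ causalTriangle a, ∀ y ∈ U, ‖k p.1 p.2 y‖ ≤ B := by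
  obtain rfl | ⟨y₀, hy₀⟩ := U.eq_empty_or_nonempty
  · simp
  obtain ⟨B, hB⟩ :=
    (isCompact_causalTriangle a).exists_bound_of_continuousOn (hk.continuousOn y₀ hy₀)
  refine ⟨B + L * diam U, fun p hp y hy => ?_⟩
  calc ‖k p.1 p.2 y‖
      ≤ ‖k p.1 p.2 y₀‖ + ‖k p.1 p.2 y - k p.1 p.2 y₀‖ := norm_le_norm_add_norm_sub' _ _
    _ ≤ B + L * dist y y₀ := by
      rw [← dist_eq_norm]
      exact add_le_add (hB p hp) ((hk.lipschitzOnWith p hp).dist_le_mul y hy y₀ hy₀)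
    _ ≤ B + L * diam U := by gcongr; exact dist_le_diam_of_mem hU hy hy₀

end IsLipschitzKernelOn

variable [NormedSpace ℝ E]

/-- The right-hand side of the Volterra equation with forcing `g` and kernel `k`, as an operator on
curves `w`. -/
noncomputable def volterraMap (g : ℝ → E) (k : ℝ → ℝ → E → E) (w : ℝ → E) (t : ℝ) : E :=
  g t + ∫ s in 0..t, k t s (w s)

/-- A continuous solution on `[0, a]`, with values in `U`, of the Volterra equation with forcing `g`
and kernel `k`. -/
structure IsVolterraSolutionOn (g : ℝ → E) (k : ℝ → ℝ → E → E) (U : Set E) (a : ℝ)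
    (u : ℝ → E) : Prop where
  continuousOn : ContinuousOn u (Icc 0 a)
  mapsTo : MapsTo u (Icc 0 a) U
  eqOn : EqOn u (volterraMap g k u) (Icc 0 a)

theorem IsVolterraSolutionOn.mono {u : ℝ → E} (hu : IsVolterraSolutionOn g k V a u) (hVU : V ⊆ U) :
    IsVolterraSolutionOn g k U a u :=
  ⟨hu.continuousOn, hu.mapsTo.mono_right hVU, hu.eqOn⟩

theorem continuousOn_volterraMap (hg : ContinuousOn g (Icc 0 a))
    (hk : IsLipschitzKernelOn k L U a) (hw : ContinuousOn w (Icc 0 a))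
    (hwU : MapsTo w (Icc 0 a) U) : ContinuousOn (volterraMap g k w) (Icc 0 a) :=
  hg.add (continuousOn_integral_of_causalTriangle (hk.continuousOn_comp hw hwU))

theorem dist_volterraMap_forcing_le {B t : ℝ}
    (hB : ∀ p ∈ causalTriangle a, ∀ y ∈ U, ‖k p.1 p.2 y‖ ≤ B) (hwU : MapsTo w (Icc 0 a) U)
    (ht : t ∈ Icc 0 a) : dist (volterraMap g k w t) (g t) ≤ B * t := by
  have hle : ∀ s ∈ uIoc 0 t, ‖k t s (w s)‖ ≤ B := fun s hs => by
    rw [uIoc_of_le ht.1] at hs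
    exact hB (t, s) (mk_mem_causalTriangle ht.2 (Ioc_subset_Icc_self hs)) _
      (hwU ⟨hs.1.le, hs.2.trans ht.2⟩)
  simpa [volterraMap, dist_eq_norm, abs_of_nonneg ht.1] using
    intervalIntegral.norm_integral_le_of_norm_le_const hle

theorem dist_volterraMap_le_mul_integral {t : ℝ} (hk : IsLipschitzKernelOn k L U a)
    (hw₁ : ContinuousOn w₁ (Icc 0 a)) (hw₂ : ContinuousOn w₂ (Icc 0 a))
    (hw₁U : MapsTo w₁ (Icc 0 a) U) (hw₂U : MapsTo w₂ (Icc 0 a) U) (ht : t ∈ Icc 0 a) :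
    dist (volterraMap g k w₁ t) (volterraMap g k w₂ t) ≤ L * ∫ s in 0..t, dist (w₁ s) (w₂ s) := by
  have hsub : Icc 0 t ⊆ Icc 0 a := Icc_subset_Icc_right ht.2
  have hint : ∀ {w : ℝ → E}, ContinuousOn w (Icc 0 a) → MapsTo w (Icc 0 a) U →
      IntervalIntegrable (fun s => k t s (w s)) volume 0 t := fun {w} hw hwU =>
    (continuousOn_slice_of_causalTriangle (f := fun t s => k t s (w s))
      (hk.continuousOn_comp hw hwU) ht.2).intervalIntegrable_of_Icc ht.1
  have hdist : IntervalIntegrable (fun s => dist (w₁ s) (w₂ s)) volume 0 t :=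
    intervalIntegrable_dist_of_Icc ht.1 (hw₁.mono hsub) (hw₂.mono hsub)
  have hle : ∀ s ∈ Icc 0 t, ‖k t s (w₁ s) - k t s (w₂ s)‖ ≤ L * dist (w₁ s) (w₂ s) := fun s hs => by
    rw [← dist_eq_norm]
    exact (hk.lipschitzOnWith (t, s) (mk_mem_causalTriangle ht.2 hs)).dist_le_mul _
      (hw₁U (hsub hs)) _ (hw₂U (hsub hs))
  calc dist (volterraMap g k w₁ t) (volterraMap g k w₂ t)
      = ‖∫ s in 0..t, k t s (w₁ s) - k t s (w₂ s)‖ := by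
        rw [intervalIntegral.integral_sub (hint hw₁ hw₁U) (hint hw₂ hw₂U), volterraMap, volterraMap,
          dist_add_left, dist_eq_norm]
    _ ≤ ∫ s in 0..t, L * dist (w₁ s) (w₂ s) :=
        intervalIntegral.norm_integral_le_of_norm_le ht.1
          (ae_of_all _ fun s hs => hle s (Ioc_subset_Icc_self hs))
          (hdist.const_mul _)
    _ = L * ∫ s in 0..t, dist (w₁ s) (w₂ s) := intervalIntegral.integral_const_mul _ _

theorem IsLipschitzKernelOn.eqOn_of_isVolterraSolutionOn (hk : IsLipschitzKernelOn k L U a)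
    (h₁ : IsVolterraSolutionOn g k U a w₁) (h₂ : IsVolterraSolutionOn g k U a w₂) :
    EqOn w₁ w₂ (Icc 0 a) := by
  have hle : ∀ t ∈ Icc 0 a, dist (w₁ t) (w₂ t) ≤ L * ∫ s in 0..t, dist (w₁ s) (w₂ s) := by
    intro t ht
    nth_rewrite 1 [h₁.eqOn ht, h₂.eqOn ht]
    exact dist_volterraMap_le_mul_integral hk h₁.continuousOn h₂.continuousOn h₁.mapsTo h₂.mapsTo ht
  have hzero := eqOn_zero_of_le_mul_integral
    (continuous_dist.comp_continuousOn (h₁.continuousOn.prodMk h₂.continuousOn))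
    (fun _ _ => dist_nonneg) hle
  exact fun t ht => dist_eq_zero.1 (hzero ht)

theorem dist_volterraMap_le_mul {D t : ℝ} (hk : IsLipschitzKernelOn k L U a)
    (hw₁ : ContinuousOn w₁ (Icc 0 a)) (hw₂ : ContinuousOn w₂ (Icc 0 a))
    (hw₁U : MapsTo w₁ (Icc 0 a) U) (hw₂U : MapsTo w₂ (Icc 0 a) U)
    (hD : ∀ s ∈ Icc 0 a, dist (w₁ s) (w₂ s) ≤ D) (ht : t ∈ Icc 0 a) :
    dist (volterraMap g k w₁ t) (volterraMap g k w₂ t) ≤ L * a * D := by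
  have hsub : Icc 0 t ⊆ Icc 0 a := Icc_subset_Icc_right ht.2
  have hint : IntervalIntegrable (fun s => dist (w₁ s) (w₂ s)) volume 0 t :=
    intervalIntegrable_dist_of_Icc ht.1 (hw₁.mono hsub) (hw₂.mono hsub)
  have hD₀ : 0 ≤ D := dist_nonneg.trans (hD t ht)
  calc dist (volterraMap g k w₁ t) (volterraMap g k w₂ t)
      ≤ L * ∫ s in 0..t, dist (w₁ s) (w₂ s) :=
        dist_volterraMap_le_mul_integral hk hw₁ hw₂ hw₁U hw₂U ht
    _ ≤ L * ∫ _ in 0..t, D := by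
        gcongr
        exact intervalIntegral.integral_mono_on ht.1 hint intervalIntegrable_const
          fun s hs => hD s (hsub hs)
    _ = L * t * D := by simp [mul_assoc]
    _ ≤ L * a * D := by gcongr; exact ht.2

theorem exists_isVolterraSolutionOn_of_mul_lt_one [CompleteSpace E] {r : ℝ}
    (hg : ContinuousOn g (Icc 0 a)) (hk : IsLipschitzKernelOn k L U a)
    (hgU : ∀ t ∈ Icc 0 a, closedBall (g t) r ⊆ U)
    (hB : ∀ w, MapsTo w (Icc 0 a) U → ∀ t ∈ Icc 0 a, dist (volterraMap g k w t) (g t) ≤ r)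
    (ha : 0 ≤ a) (hr : 0 ≤ r) (hLa : L * a < 1) :
    ∃ u, IsVolterraSolutionOn g k U a u := by
  let G : C(Icc 0 a, E) := ⟨(Icc 0 a).domRestrict g, hg.domRestrict⟩
  let ext : closedBall G r → ℝ → E := fun f => IccExtend ha f.1
  have hext : ∀ f, ContinuousOn (ext f) (Icc 0 a) := fun f =>
    f.1.continuous.Icc_extend'.continuousOn
  have hextU : ∀ f, MapsTo (ext f) (Icc 0 a) U := fun f t ht => hgU t ht <| by
    rw [mem_closedBall, show ext f t = f.1 ⟨t, ht⟩ from IccExtend_of_mem ha _ ht]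
    exact (ContinuousMap.dist_apply_le_dist (g := G) ⟨t, ht⟩).trans f.2
  have hdist : ∀ f₁ f₂ s, dist (ext f₁ s) (ext f₂ s) ≤ dist f₁ f₂ := fun _ _ _ =>
    ContinuousMap.dist_apply_le_dist _
  let Φ : closedBall G r → closedBall G r := fun f =>
    ⟨⟨(Icc 0 a).domRestrict (volterraMap g k (ext f)),
      (continuousOn_volterraMap hg hk (hext f) (hextU f)).domRestrict⟩,
      (ContinuousMap.dist_le hr).2 fun t => hB (ext f) (hextU f) t t.2⟩
  have hΦ : ContractingWith (L * a.toNNReal) Φ := by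
    refine ⟨?_, LipschitzWith.of_dist_le_mul fun f₁ f₂ =>
      (ContinuousMap.dist_le (by positivity)).2 fun t => ?_⟩
    · rwa [← NNReal.coe_lt_coe, NNReal.coe_mul, Real.coe_toNNReal a ha]
    · rw [NNReal.coe_mul, Real.coe_toNNReal a ha]
      exact dist_volterraMap_le_mul hk (hext f₁) (hext f₂) (hextU f₁) (hextU f₂)
        (fun s _ => hdist f₁ f₂ s) t.2
  have : CompleteSpace (closedBall G r) := isClosed_closedBall.completeSpace_coe
  have : Nonempty (closedBall G r) := ⟨⟨G, mem_closedBall_self hr⟩⟩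
  obtain ⟨f, hf⟩ : ∃ f, Φ f = f := ⟨_, hΦ.fixedPoint_isFixedPt⟩
  refine ⟨ext f, hext f, hextU f, fun t ht => ?_⟩
  calc ext f t = f.1 ⟨t, ht⟩ := IccExtend_of_mem ha _ ht
    _ = (Φ f).1 ⟨t, ht⟩ := by rw [hf]

theorem exists_isVolterraSolutionOn [CompleteSpace E] (hT : 0 < T) (hg : ContinuousOn g (Icc 0 T))
    (hU : U ∈ 𝓝 (g 0)) (hk : IsLipschitzKernelOn k L U T) :
    ∃ a ∈ Ioc 0 T, ∃ u, IsVolterraSolutionOn g k U a u := by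
  obtain ⟨r, hr, hrU⟩ := nhds_basis_closedBall.mem_iff.1 hU
  obtain ⟨B, hB⟩ := (hk.mono hrU le_rfl).exists_norm_le isBounded_closedBall
  have hTt : ∀ᶠ t : ℝ in 𝓝[≥] 0, t ∈ Icc 0 T := Icc_mem_nhdsGE hT
  have hg₀ : ∀ᶠ t : ℝ in 𝓝[≥] 0, dist (g t) (g 0) < r / 2 := by
    have := hg 0 (left_mem_Icc.2 hT.le)
    rw [ContinuousWithinAt, nhdsWithin_Icc_eq_nhdsGE hT] at this
    exact this (ball_mem_nhds _ (half_pos hr))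
  have hBt : ∀ᶠ t : ℝ in 𝓝[≥] 0, B * t < r / 2 := nhdsWithin_le_nhds <|
    (continuous_const_mul B).continuousAt.eventually_lt_const (by simpa using hr)
  have hLt : ∀ᶠ t : ℝ in 𝓝[≥] 0, L * t < 1 := nhdsWithin_le_nhds <|
    (continuous_const_mul (L : ℝ)).continuousAt.eventually_lt_const (by simp)
  obtain ⟨a, ha : 0 < a, hsub⟩ := mem_nhdsGE_iff_exists_Icc_subset.1
    ((hTt.and hg₀).and (hBt.and hLt))
  obtain ⟨⟨⟨-, haT⟩, -⟩, -, hLa⟩ := hsub (right_mem_Icc.2 ha.le)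
  have htube : ∀ t ∈ Icc 0 a, closedBall (g t) (r / 2) ⊆ closedBall (g 0) r := fun t ht =>
    closedBall_subset_closedBall' (by linarith [(hsub ht).1.2])
  have hmaps : ∀ w, MapsTo w (Icc 0 a) (closedBall (g 0) r) → ∀ t ∈ Icc 0 a,
      dist (volterraMap g k w t) (g t) ≤ r / 2 := fun w hw t ht =>
    (dist_volterraMap_forcing_le (fun p hp => hB p (causalTriangle_mono haT hp)) hw ht).trans
      (hsub ht).2.1.le
  obtain ⟨u, hu⟩ := exists_isVolterraSolutionOn_of_mul_lt_one
    (hg.mono (Icc_subset_Icc_right haT)) (hk.mono hrU haT) htube hmaps ha.le (half_pos hr).le hLa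
  exact ⟨a, ⟨ha, haT⟩, u, hu.mono hrU⟩

end Volterra

section Semilinear

variable {𝕜 X Y : Type*} [NontriviallyNormedField 𝕜] [NormedAddCommGroup X] [NormedSpace 𝕜 X]
  [NormedAddCommGroup Y] [NormedSpace 𝕜 Y]

theorem exists_nnnorm_le_of_continuousOn_apply [CompleteSpace X] {ι : Type*} [TopologicalSpace ι]
    {s : Set ι} (hs : IsCompact s) {S : ι → X →L[𝕜] Y} (hS : ∀ x, ContinuousOn (S · x) s) :
    ∃ M : ℝ≥0, ∀ t ∈ s, ‖S t‖₊ ≤ M := by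
  obtain ⟨M, hM⟩ := banach_steinhaus (g := fun t : s => S t) fun x =>
    let ⟨C, hC⟩ := hs.exists_bound_of_continuousOn (hS x)
    ⟨C, fun t => hC t t.2⟩
  exact ⟨M.toNNReal, fun t ht => NNReal.le_toNNReal_of_coe_le (hM ⟨t, ht⟩)⟩

theorem isLipschitzKernelOn_propagator {S : ℝ → X →L[𝕜] Y} {F : ℝ → Y → X} {U : Set Y} {T : ℝ}
    {M K : ℝ≥0} (hS : ∀ x, ContinuousOn (S · x) (Icc 0 T)) (hM : ∀ t ∈ Icc 0 T, ‖S t‖₊ ≤ M)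
    (hF : ∀ y ∈ U, ContinuousOn (F · y) (Icc 0 T))
    (hFlip : ∀ t ∈ Icc 0 T, LipschitzOnWith K (F t) U) :
    IsLipschitzKernelOn (fun t s y => S (t - s) (F s y)) (M * K) U T where
  continuousOn y hy := by
    have hjoint : ContinuousOn (fun q : ℝ × X => S q.1 q.2) (Icc 0 T ×ˢ univ) :=
      continuousOn_prod_of_continuousOn_lipschitzOnWith' _ M
        (fun t ht => ((S t).lipschitz.weaken (hM t ht)).lipschitzOnWith) fun x _ => hS x
    exact hjoint.comp (((continuous_fst.sub continuous_snd).continuousOn).prodMk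
      ((hF y hy).comp continuousOn_snd fun p hp => (causalTriangle_subset hp).2))
      fun p hp => ⟨sub_mem_Icc_of_mem_causalTriangle hp, mem_univ _⟩
  lipschitzOnWith p hp :=
    have hSp := (S (p.1 - p.2)).lipschitz.weaken (hM _ (sub_mem_Icc_of_mem_causalTriangle hp))
    hSp.comp_lipschitzOnWith (hFlip p.2 (causalTriangle_subset hp).2)

end Semilinear

theorem semilinear_existence_uniqueness_general
    {Y : Type*} [NormedAddCommGroup Y] [NormedSpace ℝ Y] [CompleteSpace Y] {T : ℝ} (hT : 0 < T)
    {S : ℝ → Y →L[ℝ] Y} (hS : ∀ y, ContinuousOn (S · y) (Icc 0 T))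
    {U : Set Y} {u₀ : Y} (hU : U ∈ 𝓝 (S 0 u₀))
    {C : ℝ → ℝ} (hC : BddAbove (C '' Icc 0 T))
    {F : ℝ → Y → Y} (hF : ∀ y ∈ U, ContinuousOn (F · y) (Icc 0 T))
    (hFlip : ∀ t ∈ Icc 0 T, ∀ v₁ ∈ U, ∀ v₂ ∈ U, ‖F t v₁ - F t v₂‖ ≤ C t * ‖v₁ - v₂‖) :
    ∃ T' ∈ Ioc 0 T, ∃ u : ℝ → Y,
      ContinuousOn u (Icc 0 T') ∧
      (∀ t ∈ Icc 0 T', u t ∈ U) ∧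
      (∀ t ∈ Icc 0 T', u t = S t u₀ + ∫ s in 0..t, S (t - s) (F s (u s))) ∧
      ∀ v : ℝ → Y,
        ContinuousOn v (Icc 0 T') →
        (∀ t ∈ Icc 0 T', v t ∈ U) →
        (∀ t ∈ Icc 0 T', v t = S t u₀ + ∫ s in 0..t, S (t - s) (F s (v s))) →
        ∀ t ∈ Icc 0 T', v t = u t := by
  obtain ⟨M, hM⟩ := exists_nnnorm_le_of_continuousOn_apply isCompact_Icc hS
  obtain ⟨K, hK⟩ := hC
  have hFlip' : ∀ t ∈ Icc 0 T, LipschitzOnWith K.toNNReal (F t) U := fun t ht =>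
    .of_dist_le_mul fun v₁ hv₁ v₂ hv₂ => by
      simp only [dist_eq_norm]
      refine (hFlip t ht v₁ hv₁ v₂ hv₂).trans ?_
      gcongr
      exact (hK (mem_image_of_mem C ht)).trans K.le_coe_toNNReal
  have hk := isLipschitzKernelOn_propagator hS hM hF hFlip'
  obtain ⟨T', hT', u, hu⟩ := exists_isVolterraSolutionOn hT (hS u₀) hU hk
  exact ⟨T', hT', u, hu.continuousOn, hu.mapsTo, hu.eqOn, fun v hv hvU hveq =>
    (hk.mono subset_rfl hT'.2).eqOn_of_isVolterraSolutionOn ⟨hv, hvU, hveq⟩ hu⟩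

/-- Abstract form of the semilinear existence theorem of Section 3: given a
norm-continuous propagator `𝔖` on `[0,T]` with `𝔖(0) = id`, an open set `U ∋ u₀`,
and a continuous `F` which on `U` is bounded by `C(t)(1+‖v‖)` and Lipschitz with
constant `C(t)`, there exist `T′ ∈ (0,T]` and a unique continuous `U`-valued mild
solution `u(t) = 𝔖(t)u₀ + ∫₀ᵗ 𝔖(t−s)F(s,u(s)) ds` on `[0,T′]`. -/
theorem semilinear_existence_uniqueness
    {Y : Type*} [NormedAddCommGroup Y] [NormedSpace ℝ Y] [CompleteSpace Y]
    (T : ℝ) (hT : 0 < T)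
    (𝔖 : ℝ → Y →L[ℝ] Y)
    (h𝔖cont : ContinuousOn 𝔖 (Set.Icc 0 T))
    (h𝔖0 : 𝔖 0 = ContinuousLinearMap.id ℝ Y)
    (U : Set Y) (hU : IsOpen U) (u₀ : Y) (hu₀ : u₀ ∈ U)
    (C : ℝ → ℝ) (hCcont : ContinuousOn C (Set.Icc 0 T))
    (hCnonneg : ∀ t ∈ Set.Icc (0 : ℝ) T, 0 ≤ C t)
    (F : ℝ → Y → Y)
    (hFcont : ContinuousOn (fun p : ℝ × Y => F p.1 p.2) (Set.Icc 0 T ×ˢ Set.univ))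
    (hFbd : ∀ t ∈ Set.Icc (0 : ℝ) T, ∀ v ∈ U, ‖F t v‖ ≤ C t * (1 + ‖v‖))
    (hFlip : ∀ t ∈ Set.Icc (0 : ℝ) T, ∀ v₁ ∈ U, ∀ v₂ ∈ U,
      ‖F t v₁ - F t v₂‖ ≤ C t * ‖v₁ - v₂‖) :
    ∃ T' : ℝ, T' ∈ Set.Ioc 0 T ∧
      ∃ u : ℝ → Y,
        ContinuousOn u (Set.Icc 0 T') ∧
        (∀ t ∈ Set.Icc (0 : ℝ) T', u t ∈ U) ∧
        (∀ t ∈ Set.Icc (0 : ℝ) T',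
          u t = 𝔖 t u₀ + ∫ s in (0 : ℝ)..t, 𝔖 (t - s) (F s (u s))) ∧
        ∀ v : ℝ → Y,
          ContinuousOn v (Set.Icc 0 T') →
          (∀ t ∈ Set.Icc (0 : ℝ) T', v t ∈ U) →
          (∀ t ∈ Set.Icc (0 : ℝ) T',
            v t = 𝔖 t u₀ + ∫ s in (0 : ℝ)..t, 𝔖 (t - s) (F s (v s))) →
          ∀ t ∈ Set.Icc (0 : ℝ) T', v t = u t :=
  semilinear_existence_uniqueness_general hT (fun _ => h𝔖cont.clm_apply continuousOn_const)
    (hU.mem_nhds (by simpa [h𝔖0] using hu₀)) (isCompact_Icc.bddAbove_image hCcont)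
    (fun _ _ => hFcont.comp (continuousOn_id.prodMk continuousOn_const) fun _ ht => ⟨ht, trivial⟩)
    hFlip
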